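/- arXiv:1807.00497 — 3 statements merged into one kernel-verified Lean document; each statement's English description precedes it below -/
import Mathlib

section
/- Let b > 0, let Φ:(0,b) → End(ℝ^{n+2}) be continuous, and let ℬ:(0,b) → ℝ be integrable with ‖Φ(t)‖ ≤ ℬ(t) for all t ∈ (0,b). Fix p ∈ (0,b) and let G:(0,b) → End(ℝ^{n+2}) be differentiable with G′(t) = G(t)∘Φ(t) for all t and G(p) = id. Then: (i) the limit of G(t) as t → 0⁺ exists; (ii) for every t ∈ (0,p], ‖G(t) − id‖ ≤ exp(∫ₜ^p ℬ(τ) d τ) − 1; and (iii) if in addition every Φ(t) is skew-adjoint with respect to the Minkowski form, then the limit in (i) is an invertible endomorphism preserving the Minkowski form. -/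
open scoped BigOperators Topology
open Filter Set MeasureTheory

noncomputable section

abbrev E (n : ℕ) := EuclideanSpace ℝ (Fin (n + 2))

/-- Minkowski inner product of signature (n+1,1). -/
def mink {n : ℕ} (x y : E n) : ℝ :=
  ∑ i, (if i = Fin.last (n + 1) then (-1 : ℝ) else 1) * x i * y i

variable {n : ℕ}

lemma mink_comm (x y : E n) : mink x y = mink y x :=
  Finset.sum_congr rfl fun i _ => by ring

lemma mink_add_right (v x y : E n) : mink v (x + y) = mink v x + mink v y := by
  simp [mink, mul_add, Finset.sum_add_distrib]

lemma mink_smul_right (v : E n) (c : ℝ) (x : E n) : mink v (c • x) = c * mink v x := by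
  unfold mink
  rw [Finset.mul_sum]
  refine Finset.sum_congr rfl fun i _ => ?_
  simp only [PiLp.smul_apply, smul_eq_mul]
  ring

lemma mink_add_left (x y v : E n) : mink (x + y) v = mink x v + mink y v := by
  rw [mink_comm, mink_add_right, mink_comm v x, mink_comm v y]

lemma mink_smul_left (c : ℝ) (x v : E n) : mink (c • x) v = c * mink x v := by
  rw [mink_comm, mink_smul_right, mink_comm v x]

/-- `v ∧ w` as an endomorphism: `x ↦ ⟨v,x⟩ w − ⟨w,x⟩ v`. -/
def wedge {n : ℕ} (v w : E n) : E n →L[ℝ] E n :=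
  LinearMap.toContinuousLinearMap
    { toFun := fun x => mink v x • w - mink w x • v
      map_add' := by
        intro x y
        simp only [mink_add_right, add_smul]
        abel
      map_smul' := by
        intro c x
        simp only [mink_smul_right, RingHom.id_apply, mul_smul, smul_sub] }

/-- rank one endomorphism `vw* : x ↦ ⟨x,w⟩ v`. -/
def rankOne {n : ℕ} (v w : E n) : E n →L[ℝ] E n :=
  LinearMap.toContinuousLinearMap
    { toFun := fun x => mink x w • v
      map_add' := by
        intro x y
        simp only [mink_add_left, add_smul]
      map_smul' := by
        intro c x
        simp only [mink_smul_left, RingHom.id_apply, mul_smul] }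

lemma aux_bound {b : ℝ} {Φ G : ℝ → E n →L[ℝ] E n} {B : ℝ → ℝ}
    (hΦc : ContinuousOn Φ (Set.Ioo 0 b))
    (hBint : IntegrableOn B (Set.Ioo 0 b))
    (hbound : ∀ t ∈ Set.Ioo (0:ℝ) b, ‖Φ t‖ ≤ B t)
    {p : ℝ} (hp : p ∈ Set.Ioo (0:ℝ) b)
    (hG : ∀ t ∈ Set.Ioo (0:ℝ) b, HasDerivAt G (G t * Φ t) t)
    (hGp : G p = 1) :
    ∀ t ∈ Set.Ioc (0:ℝ) p, ‖G t - 1‖ ≤ Real.exp (∫ τ in t..p, B τ) - 1 := by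
  intro t ht
  have hsub : ∀ s ∈ Icc 0 (p - t), p - s ∈ Ioo 0 b := by
    intro s hs
    exact ⟨by linarith [hs.2, ht.1], by linarith [hs.1, hp.2]⟩
  have hint : ∀ x ∈ Ioo 0 b, IntervalIntegrable (fun τ => ‖Φ τ‖) volume p x := by
    intro x hx
    apply ContinuousOn.intervalIntegrable
    exact hΦc.norm.mono (ordConnected_Ioo.uIcc_subset hp hx)
  set P : ℝ → ℝ := fun x => ∫ τ in p..x, ‖Φ τ‖ with hP
  have hPd : ∀ x ∈ Ioo 0 b, HasDerivAt P ‖Φ x‖ x := by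
    intro x hx
    exact intervalIntegral.integral_hasDerivAt_right (hint x hx)
      (hΦc.norm.stronglyMeasurableAtFilter isOpen_Ioo x hx)
      (hΦc.norm.continuousAt (isOpen_Ioo.mem_nhds hx))
  have htb : t ∈ Ioo 0 b := ⟨ht.1, ht.2.trans_lt hp.2⟩
  have key : ∀ ε > 0, ‖G t - 1‖ ≤ Real.exp (-P t + ε * (p - t)) - 1 := by
    intro ε hε
    have hf : ∀ s ∈ Icc 0 (p - t),
        HasDerivAt (fun s => G (p - s) - 1) (-(G (p - s) * Φ (p - s))) s := by
      intro s hs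
      exact ((hG _ (hsub s hs)).comp_const_sub p s).sub_const 1
    have hU : ∀ s ∈ Icc 0 (p - t),
        HasDerivAt (fun s => Real.exp (-P (p - s) + ε * s) - 1)
          (Real.exp (-P (p - s) + ε * s) * (‖Φ (p - s)‖ + ε)) s := by
      intro s hs
      have h1 := ((hPd _ (hsub s hs)).comp_const_sub p s).neg
      have h2 := (h1.add ((hasDerivAt_id s).const_mul ε)).exp.sub_const 1
      refine HasDerivAt.congr_deriv h2 ?_
      simp
    have := image_norm_le_of_norm_deriv_right_lt_deriv_boundary'
      (f := fun s => G (p - s) - 1) (f' := fun s => -(G (p - s) * Φ (p - s)))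
      (a := 0) (b := p - t)
      (B := fun s => Real.exp (-P (p - s) + ε * s) - 1)
      (B' := fun s => Real.exp (-P (p - s) + ε * s) * (‖Φ (p - s)‖ + ε))
      (fun s hs => (hf s hs).continuousAt.continuousWithinAt)
      (fun s hs => (hf s (Ico_subset_Icc_self hs)).hasDerivWithinAt)
      (by simp [hGp, hP])
      (fun s hs => (hU s hs).continuousAt.continuousWithinAt)
      (fun s hs => (hU s (Ico_subset_Icc_self hs)).hasDerivWithinAt)
      (by
        intro s hs heq
        rw [norm_neg]
        have h1 : ‖G (p - s)‖ ≤ Real.exp (-P (p - s) + ε * s) := by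
          have h2 : ‖G (p - s)‖ ≤ ‖G (p - s) - 1‖ + ‖(1 : E n →L[ℝ] E n)‖ := by
            simpa using norm_add_le (G (p - s) - 1) 1
          have h3 : ‖(1 : E n →L[ℝ] E n)‖ ≤ 1 := ContinuousLinearMap.norm_id_le
          replace heq : ‖G (p - s) - 1‖ = Real.exp (-P (p - s) + ε * s) - 1 := heq
          linarith
        have h0 := Real.exp_pos (-P (p - s) + ε * s)
        calc ‖G (p - s) * Φ (p - s)‖ ≤ ‖G (p - s)‖ * ‖Φ (p - s)‖ := norm_mul_le _ _
          _ ≤ Real.exp (-P (p - s) + ε * s) * ‖Φ (p - s)‖ := by gcongr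
          _ < _ := by nlinarith)
      (right_mem_Icc.2 (by linarith [ht.2]))
    simpa using this
  have lim : ‖G t - 1‖ ≤ Real.exp (-P t) - 1 := by
    have hT : Tendsto (fun ε : ℝ => Real.exp (-P t + ε * (p - t)) - 1) (𝓝[>] 0)
        (𝓝 (Real.exp (-P t) - 1)) := by
      have : Continuous (fun ε : ℝ => Real.exp (-P t + ε * (p - t)) - 1) := by fun_prop
      have h := this.tendsto 0
      simp only [zero_mul, add_zero] at h
      exact h.mono_left nhdsWithin_le_nhds
    exact ge_of_tendsto hT (eventually_nhdsWithin_of_forall fun ε hε => key ε hε)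
  refine lim.trans ?_
  gcongr
  rw [hP, ← intervalIntegral.integral_symm]
  have hsub2 : Icc t p ⊆ Ioo 0 b := fun x hx => ⟨ht.1.trans_le hx.1, hx.2.trans_lt hp.2⟩
  apply intervalIntegral.integral_mono_on ht.2 (hint t htb).symm
  · rw [intervalIntegrable_iff_integrableOn_Icc_of_le ht.2]
    exact hBint.mono_set hsub2
  · exact fun x hx => hbound x (hsub2 hx)

lemma aux_lim {b : ℝ} {Φ G : ℝ → E n →L[ℝ] E n} {B : ℝ → ℝ}
    (hΦc : ContinuousOn Φ (Set.Ioo 0 b))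
    (hBint : IntegrableOn B (Set.Ioo 0 b))
    (hbound : ∀ t ∈ Set.Ioo (0:ℝ) b, ‖Φ t‖ ≤ B t)
    {p : ℝ} (hp : p ∈ Set.Ioo (0:ℝ) b)
    (hG : ∀ t ∈ Set.Ioo (0:ℝ) b, HasDerivAt G (G t * Φ t) t)
    (hGp : G p = 1) :
    ∃ L : E n →L[ℝ] E n, Tendsto G (𝓝[>] 0) (𝓝 L) := by
  have hb1 := aux_bound hΦc hBint hbound hp hG hGp
  have hsub : Ioc 0 p ⊆ Ioo 0 b := fun x hx => ⟨hx.1, hx.2.trans_lt hp.2⟩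
  have hBp : IntegrableOn B (Ioc 0 p) := hBint.mono_set hsub
  set M := Real.exp (∫ τ in (0:ℝ)..p, B τ)
  have hM : ∀ t ∈ Ioc 0 p, ‖G t‖ ≤ M := by
    intro t ht
    have h1 : ∫ τ in t..p, B τ ≤ ∫ τ in (0:ℝ)..p, B τ := by
      rw [intervalIntegral.integral_of_le ht.2, intervalIntegral.integral_of_le hp.1.le]
      apply setIntegral_mono_set hBp
      · exact (ae_restrict_iff' measurableSet_Ioc).2
          (Eventually.of_forall fun x hx => (norm_nonneg _).trans (hbound x (hsub hx)))
      · exact (Ioc_subset_Ioc_left ht.1.le).eventuallyLE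
    have h2 := hb1 t ht
    have h3 : ‖G t‖ ≤ ‖G t - 1‖ + ‖(1 : E n →L[ℝ] E n)‖ := by
      simpa using norm_add_le (G t - 1) 1
    have h4 : ‖(1 : E n →L[ℝ] E n)‖ ≤ 1 := ContinuousLinearMap.norm_id_le
    have h5 := Real.exp_le_exp.2 h1
    linarith
  have hGc : ContinuousOn G (Ioo 0 b) := fun x hx => (hG x hx).continuousAt.continuousWithinAt
  have hc : ContinuousOn (fun t => G t * Φ t) (Ioo 0 b) := hGc.mul hΦc
  have hI : IntegrableOn (fun t => G t * Φ t) (Ioc 0 p) := by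
    refine Integrable.mono' (hBp.const_mul M)
      ((hc.mono hsub).aestronglyMeasurable measurableSet_Ioc) ?_
    refine (ae_restrict_iff' measurableSet_Ioc).2 (Eventually.of_forall fun x hx => ?_)
    refine (norm_mul_le _ _).trans ?_
    exact mul_le_mul (hM x hx) (hbound x (hsub hx)) (norm_nonneg _) (Real.exp_pos _).le
  have hcont := intervalIntegral.continuousOn_primitive_interval_left
    (f := fun t => G t * Φ t) (a := 0) (b := p) (μ := volume)
    (by rw [uIcc_of_le hp.1.le, integrableOn_Icc_iff_integrableOn_Ioc]; exact hI)
  rw [uIcc_of_le hp.1.le] at hcont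
  have h0 := (hcont 0 (left_mem_Icc.2 hp.1.le)).mono_left
    (nhdsWithin_mono _ (Ioc_subset_Icc_self))
  rw [nhdsWithin_Ioc_eq_nhdsGT hp.1] at h0
  refine ⟨1 - ∫ t in (0:ℝ)..p, G t * Φ t, (h0.const_sub 1).congr' ?_⟩
  filter_upwards [Ioc_mem_nhdsGT hp.1] with t ht
  have hu : uIcc t p ⊆ Ioo 0 b := ordConnected_Ioo.uIcc_subset (hsub ht) hp
  rw [intervalIntegral.integral_eq_sub_of_hasDerivAt (f := G) (fun x hx => hG x (hu hx))
    (hc.mono hu).intervalIntegrable, hGp]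
  abel

def signJ (n : ℕ) : E n →L[ℝ] E n :=
  LinearMap.toContinuousLinearMap
    { toFun := fun x => WithLp.toLp 2
        (fun i => (if i = Fin.last (n + 1) then (-1 : ℝ) else 1) * x i)
      map_add' := by
        intro x y
        ext i
        simp [mul_add]
      map_smul' := by
        intro c x
        ext i
        simp only [PiLp.smul_apply, smul_eq_mul, RingHom.id_apply]
        ring }

lemma signJ_apply (x : E n) (i : Fin (n + 2)) :
    signJ n x i = (if i = Fin.last (n + 1) then (-1 : ℝ) else 1) * x i := rfl

lemma signJ_sq : signJ n * signJ n = 1 := by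
  ext x i
  change signJ n (signJ n x) i = x i
  simp only [signJ_apply]
  split_ifs <;> simp

lemma mink_eq (x y : E n) : mink x y = inner ℝ (signJ n x) y := by
  rw [PiLp.inner_apply, mink]
  refine Finset.sum_congr rfl fun i _ => ?_
  rw [signJ_apply]
  simp [mul_comm]

lemma clm_mul_neg (a c : E n →L[ℝ] E n) : a * -c = -(a * c) := mul_neg a c

lemma clm_neg_mul (a c : E n →L[ℝ] E n) : -a * c = -(a * c) := neg_mul a c

lemma aux_pres {b : ℝ} {Φ G : ℝ → E n →L[ℝ] E n}
    {p : ℝ} (hp : p ∈ Set.Ioo (0:ℝ) b)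
    (hG : ∀ t ∈ Set.Ioo (0:ℝ) b, HasDerivAt G (G t * Φ t) t)
    (hGp : G p = 1) (L : E n →L[ℝ] E n) (hL : Tendsto G (𝓝[>] 0) (𝓝 L))
    (hs : ∀ t ∈ Set.Ioo (0:ℝ) b, ∀ x y : E n, mink (Φ t x) y = - mink x (Φ t y)) :
    (∀ x y : E n, mink (L x) (L y) = mink x y) ∧ Function.Bijective L := by
  set J := signJ n with hJ
  have hJJ : J * J = 1 := signJ_sq
  have hskew : ∀ t ∈ Ioo 0 b, Φ t * J = - (J * star (Φ t)) := by
    intro t ht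
    have h1 : J * Φ t = - (star (Φ t) * J) := by
      ext1 x
      refine ext_inner_right ℝ fun y => ?_
      have := hs t ht x y
      rw [mink_eq, mink_eq] at this
      change inner ℝ (J (Φ t x)) y = inner ℝ (-(ContinuousLinearMap.adjoint (Φ t) (J x))) y
      rw [inner_neg_left, ContinuousLinearMap.adjoint_inner_left]
      exact this
    calc Φ t * J = (J * J) * Φ t * J := by rw [hJJ, one_mul]
      _ = J * (J * Φ t) * J := by noncomm_ring
      _ = - (J * star (Φ t) * (J * J)) := by simp only [h1, clm_mul_neg, clm_neg_mul, mul_assoc]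
      _ = _ := by rw [hJJ, mul_one]
  have hF : ∀ t ∈ Ioo 0 b, HasDerivAt (fun t => G t * J * star (G t)) 0 t := by
    intro t ht
    have h := ((hG t ht).mul_const J).mul (hG t ht).star
    refine HasDerivAt.congr_deriv h ?_
    rw [star_mul]
    have : G t * Φ t * J = - (G t * J * star (Φ t)) := by
      rw [mul_assoc, hskew t ht]; simp only [clm_mul_neg, mul_assoc]
    rw [this]; simp only [clm_neg_mul, mul_assoc]; exact neg_add_cancel _
  have hc : ∀ t ∈ Ioo 0 b, G t * J * star (G t) = J := by
    intro t ht
    have := isOpen_Ioo.is_const_of_deriv_eq_zero isPreconnected_Ioo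
      (fun x hx => (hF x hx).differentiableAt.differentiableWithinAt)
      (fun x hx => (hF x hx).deriv) ht hp
    simpa [hGp] using this
  have hLJ : L * J * star L = J := by
    have hst : Tendsto (fun t => star (G t)) (𝓝[>] 0) (𝓝 (star L)) :=
      ((ContinuousLinearMap.adjoint (𝕜 := ℝ) (E := E n) (F := E n)).continuous.tendsto L).comp hL
    refine tendsto_nhds_unique ((hL.mul_const J).mul hst) ?_
    refine tendsto_const_nhds.congr' ?_
    filter_upwards [Ioo_mem_nhdsGT (hp.1.trans hp.2)] with t ht
    exact (hc t ht).symm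
  have hR : L * (J * star L * J) = 1 := by
    rw [← hJJ, ← mul_assoc, ← mul_assoc, hLJ]
  have hLeft : (J * star L * J) * L = 1 := by
    have h1 : (L : E n →ₗ[ℝ] E n) * ((J * star L * J : E n →L[ℝ] E n) : E n →ₗ[ℝ] E n) = 1 := by
      ext1 x
      exact DFunLike.congr_fun hR x
    have h2 := mul_eq_one_comm.1 h1
    ext1 x
    exact DFunLike.congr_fun h2 x
  have hfin : star L * J * L = J := by
    calc star L * J * L = (J * J) * (star L * J * L) := by rw [hJJ, one_mul]
      _ = J * ((J * star L * J) * L) := by noncomm_ring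
      _ = J := by rw [hLeft, mul_one]
  refine ⟨fun x y => ?_, ?_⟩
  · rw [mink_eq, mink_eq, ← ContinuousLinearMap.adjoint_inner_left,
      ← ContinuousLinearMap.star_eq_adjoint]
    congr 1
    exact DFunLike.congr_fun hfin x
  · exact Function.bijective_iff_has_inverse.2 ⟨(J * star L * J : E n →L[ℝ] E n),
      fun x => DFunLike.congr_fun hLeft x, fun x => DFunLike.congr_fun hR x⟩

/-- Corollary 3.3: continuity at the singularity of primitives with
integrably bounded coefficient. -/
theorem stmt7 {n : ℕ} (b : ℝ) (hb : 0 < b)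
    (Φ : ℝ → E n →L[ℝ] E n) (B : ℝ → ℝ)
    (hΦc : ContinuousOn Φ (Set.Ioo 0 b))
    (hBint : IntegrableOn B (Set.Ioo 0 b))
    (hbound : ∀ t ∈ Set.Ioo (0:ℝ) b, ‖Φ t‖ ≤ B t)
    (p : ℝ) (hp : p ∈ Set.Ioo (0:ℝ) b)
    (G : ℝ → E n →L[ℝ] E n)
    (hG : ∀ t ∈ Set.Ioo (0:ℝ) b, HasDerivAt G (G t * Φ t) t)
    (hGp : G p = 1) :
    (∃ L : E n →L[ℝ] E n, Tendsto G (𝓝[>] 0) (𝓝 L) ∧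
      ((∀ t ∈ Set.Ioo (0:ℝ) b, ∀ x y : E n, mink (Φ t x) y = - mink x (Φ t y)) →
        (∀ x y : E n, mink (L x) (L y) = mink x y) ∧ Function.Bijective L)) ∧
    ∀ t ∈ Set.Ioc (0:ℝ) p, ‖G t - 1‖ ≤ Real.exp (∫ τ in t..p, B τ) - 1 := by
  obtain ⟨L, hL⟩ := aux_lim hΦc hBint hbound hp hG hGp
  exact ⟨⟨L, hL, fun hs => aux_pres hp hG hGp L hL hs⟩,
    aux_bound hΦc hBint hbound hp hG hGp⟩
end
end

section
/- Let b > 0, let v₊, v₋ ∈ ℝ^{n+2} be null with ζ := ⟨v₊,v₋⟩ > 0, and let Δ:(0,b) → End(ℝ^{n+2}) be continuous and bounded with each Δ(t) skew-adjoint with respect to the Minkowski form. Define Ψ(t) := −(1/t)·(v₋∧v₊) + Δ(t), and for each p ∈ (0,b) let G_p:(0,b) → End(ℝ^{n+2}) be differentiable with G_p′(t) = G_p(t)∘Ψ(t) and G_p(p) = id. Then there is a continuous map k:[0,b) → ℝ^{n+2} with k(t) null and nonzero for every t and k(0) = v₊/ζ, such that for every p ∈ (0,b): (t/p)^ζ·G_p(t)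 converges to the rank-one endomorphism k(p)v₋* as t → 0⁺, and (t/p)^ζ·G_p(t)(k(t)) = k(p) for all t ∈ (0,b). -/
open scoped BigOperators Topology
open Filter Set MeasureTheory

noncomputable section

variable {n : ℕ}

theorem aux_L1 {V : Type*} [NormedAddCommGroup V] [NormedSpace ℝ V] (f g : ℝ → V)
    (l K t q : ℝ) (hl : 0 ≤ l) (ht : 0 < t) (htq : t ≤ q)
    (hf : ∀ s ∈ Set.Icc t q, HasDerivAt f ((l / s) • f s + g s) s)
    (hg : ∀ s ∈ Set.Icc t q, ‖g s‖ ≤ K) :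
    ‖f t - (t / q) ^ l • f q‖ ≤ K * (q - t) := by
  have key : ∀ s ∈ Set.Icc t q,
      HasDerivWithinAt (fun s => (t ^ l * s ^ (-l)) • f s) ((t / s) ^ l • g s) (Set.Icc t q) s := by
    intro s hs
    have hs0 : 0 < s := lt_of_lt_of_le ht hs.1
    have h1 : HasDerivAt (fun s : ℝ => t ^ l * s ^ (-l)) (t ^ l * (-l * s ^ (-l - 1))) s :=
      (Real.hasDerivAt_rpow_const (Or.inl hs0.ne')).const_mul _
    have h2 := (h1.smul (hf s hs)).hasDerivWithinAt (s := Set.Icc t q)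
    refine h2.congr_deriv ?_
    symm
    rw [Real.div_rpow ht.le hs0.le, Real.rpow_sub_one hs0.ne', Real.rpow_neg hs0.le]
    rw [smul_add, smul_smul, add_comm, ← add_assoc, ← add_smul]
    rw [show t ^ l * (-l * ((s ^ l)⁻¹ / s)) + t ^ l * (s ^ l)⁻¹ * (l / s) = 0 by ring]
    rw [zero_smul, zero_add, div_eq_mul_inv]
  have hb : ∀ s ∈ Set.Icc t q, ‖(t / s) ^ l • g s‖ ≤ K := by
    intro s hs
    have hs0 : 0 < s := lt_of_lt_of_le ht hs.1
    rw [norm_smul, Real.norm_of_nonneg (by positivity)]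
    have h1 : (t / s) ^ l ≤ 1 :=
      Real.rpow_le_one (by positivity) ((div_le_one hs0).2 hs.1) hl
    calc (t / s) ^ l * ‖g s‖ ≤ 1 * ‖g s‖ := by gcongr
      _ ≤ K := by rw [one_mul]; exact hg s hs
  have := (convex_Icc t q).norm_image_sub_le_of_norm_hasDerivWithin_le key hb
    (Set.right_mem_Icc.2 htq) (Set.left_mem_Icc.2 htq)
  have hq : 0 < q := lt_of_lt_of_le ht htq
  rw [Real.norm_of_nonpos (by linarith : t - q ≤ 0)] at this
  simp only [Real.rpow_neg ht.le, Real.rpow_neg hq.le] at this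
  rw [mul_inv_cancel₀ (by positivity), one_smul, ← div_eq_mul_inv, ← Real.div_rpow ht.le hq.le] at this
  simpa using this

theorem aux_L2 {V : Type*} [NormedAddCommGroup V] [NormedSpace ℝ V] (f : ℝ → V)
    (l K q : ℝ) (hl : 0 < l) (hq : 0 < q)
    (h : ∀ r t, 0 < t → t ≤ r → r ≤ q → ‖f t - (t / r) ^ l • f r‖ ≤ K * (r - t)) :
    Tendsto f (𝓝[>] 0) (𝓝 0) := by
  have hK : 0 ≤ K := by
    have := (norm_nonneg _).trans (h q (q/2) (by linarith) (by linarith) le_rfl)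
    nlinarith
  rw [Metric.tendsto_nhds]
  intro ε hε
  obtain ⟨r, hr0, hrq, hr⟩ : ∃ r, 0 < r ∧ r ≤ q ∧ K * r < ε / 2 := by
    refine ⟨min q (ε / (2 * (K + 1)) / 2), by positivity, min_le_left _ _, ?_⟩
    have : min q (ε / (2 * (K + 1)) / 2) ≤ ε / (2 * (K + 1)) / 2 := min_le_right _ _
    calc K * _ ≤ K * (ε / (2 * (K + 1)) / 2) := by gcongr
      _ < ε / 2 := by
        field_simp
        nlinarith
  have h0 : Tendsto (fun t : ℝ => (t / r) ^ l * ‖f r‖) (𝓝[>] 0) (𝓝 0) := by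
    have : ContinuousAt (fun t : ℝ => (t / r) ^ l * ‖f r‖) 0 := by
      refine ContinuousAt.mul ?_ continuousAt_const
      exact ContinuousAt.rpow_const (by fun_prop) (Or.inr hl.le)
    have h2 := this.tendsto
    simp only [zero_div, Real.zero_rpow hl.ne', zero_mul] at h2
    exact h2.mono_left nhdsWithin_le_nhds
  filter_upwards [h0.eventually (gt_mem_nhds (show (0:ℝ) < ε / 2 by linarith)),
    Ioo_mem_nhdsGT hr0] with t ht ht2
  have h3 := h r t ht2.1 ht2.2.le hrq
  have h4 : ‖f t‖ ≤ ‖f t - (t / r) ^ l • f r‖ + ‖(t / r) ^ l • f r‖ := norm_le_norm_sub_add _ _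
  have h5 : 0 ≤ (t / r) ^ l := Real.rpow_nonneg (div_nonneg ht2.1.le hr0.le) _
  rw [norm_smul, Real.norm_of_nonneg h5] at h4
  rw [dist_zero_right]
  nlinarith [ht2.1]

/-- uniform small-interval bound -/
theorem aux_bound_s10 {R : Type*} [NormedAddCommGroup R] (H : ℝ → R) (C a t q : ℝ)
    (ha : a ≤ 1 / 2) (htq : t ≤ q)
    (hc : ContinuousOn H (Set.Icc t q))
    (h : ∀ s ∈ Set.Icc t q, ∀ S, (∀ r ∈ Set.Icc s q, ‖H r‖ ≤ S) → ‖H s‖ ≤ C + a * S) :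
    ‖H t‖ ≤ 2 * C := by
  obtain ⟨s, hs, hmax⟩ := isCompact_Icc.exists_isMaxOn (Set.nonempty_Icc.2 htq) hc.norm
  have h1 := h s hs ‖H s‖ (fun r hr => hmax ⟨hs.1.trans hr.1, hr.2⟩)
  have h2 : ‖H t‖ ≤ ‖H s‖ := hmax (Set.left_mem_Icc.2 htq)
  have := norm_nonneg (H s)
  nlinarith

theorem aux_cocycle {R : Type*} [NormedRing R] [NormedAlgebra ℝ R] [CompleteSpace R]
    (b : ℝ) (W : R) (Δ : ℝ → R) (D : ℝ) (hD : ∀ t ∈ Set.Ioo (0:ℝ) b, ‖Δ t‖ ≤ D)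
    (X Y : ℝ → R)
    (hX : ∀ t ∈ Set.Ioo (0:ℝ) b, HasDerivAt X (X t * ((-t⁻¹) • W + Δ t)) t)
    (hY : ∀ t ∈ Set.Ioo (0:ℝ) b, HasDerivAt Y (Y t * ((-t⁻¹) • W + Δ t)) t)
    (t : ℝ) (ht : t ∈ Set.Ioo (0:ℝ) b) (hXY : X t = Y t) (s : ℝ) (hs : s ∈ Set.Ioo (0:ℝ) b) :
    X s = Y s := by
  set c := min s t / 2 with hc
  have hm : 0 < min s t := lt_min hs.1 ht.1
  have hc0 : 0 < c := by positivity
  have hcs : c < s := by have := min_le_left s t; linarith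
  have hct : c < t := by have := min_le_right s t; linarith
  have hsub : ∀ r ∈ Set.Ioo c b, r ∈ Set.Ioo 0 b := fun r hr => ⟨hc0.trans hr.1, hr.2⟩
  have hlip : ∀ r ∈ Set.Ioo c b, LipschitzOnWith (Real.toNNReal (c⁻¹ * ‖W‖ + D))
      (fun x : R => x * ((-r⁻¹) • W + Δ r)) Set.univ := by
    intro r hr
    refine LipschitzOnWith.of_dist_le_mul fun x _ y _ => ?_
    rw [dist_eq_norm, dist_eq_norm, ← sub_mul, mul_comm _ ‖x - y‖]
    refine (norm_mul_le _ _).trans (mul_le_mul_of_nonneg_left ?_ (norm_nonneg _))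
    refine le_trans ?_ (Real.le_coe_toNNReal _)
    refine (norm_add_le _ _).trans (add_le_add ?_ (hD r (hsub r hr)))
    rw [norm_smul, norm_neg, norm_inv, Real.norm_of_nonneg (hsub r hr).1.le]
    have := hr.1
    gcongr
  exact ODE_solution_unique_of_mem_Ioo hlip ⟨hct, ht.2⟩
    (fun r hr => ⟨hX r (hsub r hr), Set.mem_univ _⟩)
    (fun r hr => ⟨hY r (hsub r hr), Set.mem_univ _⟩) hXY ⟨hcs, hs.2⟩

theorem aux_proj {R : Type*} [NormedRing R] [NormedAlgebra ℝ R]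
    (z p : ℝ) (W P : R) (c : ℝ) (hWP : W * P = c • P) (Δ : ℝ → R) (G : ℝ → R) (hp : 0 < p)
    (t : ℝ) (ht : 0 < t) (hG : HasDerivAt G (G t * ((-t⁻¹) • W + Δ t)) t) :
    HasDerivAt (fun t => ((t / p) ^ z • G t) * P)
      (((z - c) / t) • (((t / p) ^ z • G t) * P) + ((t / p) ^ z • G t) * Δ t * P) t := by
  have h1 : HasDerivAt (fun t : ℝ => (t / p) ^ z) (1 / p * z * (t / p) ^ (z - 1)) t :=
    ((hasDerivAt_id t).div_const p).rpow_const (Or.inl (by simp; exact ⟨ht.ne', hp.ne'⟩))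
  have h2 := (h1.smul hG).mul_const P
  refine h2.congr_deriv ?_
  symm
  rw [Real.rpow_sub_one (by positivity)]
  simp only [mul_add, add_mul, smul_add, smul_mul_assoc, mul_smul_comm, mul_assoc, hWP, smul_smul]
  have e : 1 / p * (z * ((t / p) ^ z / (t / p))) = z / t * (t / p) ^ z := by
    field_simp
  rw [e, sub_div, sub_mul, sub_smul]
  rw [show (t / p) ^ z * (-t⁻¹ * c) = - (c / t * (t / p) ^ z) by ring, neg_smul]
  abel

theorem aux_est {R : Type*} [NormedRing R] [NormedAlgebra ℝ R]
    (b z : ℝ) (W : R) (Δ : ℝ → R) (D : ℝ) (hD : ∀ t ∈ Set.Ioo (0:ℝ) b, ‖Δ t‖ ≤ D)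
    (G : ℝ → R) (p : ℝ) (hp : 0 < p)
    (hG : ∀ t ∈ Set.Ioo (0:ℝ) b, HasDerivAt G (G t * ((-t⁻¹) • W + Δ t)) t)
    (P : R) (c : ℝ) (hc : c ≤ z) (hWP : W * P = c • P) (s r S : ℝ) (hs : 0 < s) (hsr : s ≤ r)
    (hr : r < b) (hS : ∀ t ∈ Set.Icc s r, ‖(t / p) ^ z • G t‖ ≤ S) :
    ‖((s / p) ^ z • G s) * P - (s / r) ^ (z - c) • (((r / p) ^ z • G r) * P)‖
      ≤ S * D * ‖P‖ * (r - s) := by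
  have hsub : ∀ t ∈ Set.Icc s r, t ∈ Set.Ioo 0 b :=
    fun t ht => ⟨hs.trans_le ht.1, ht.2.trans_lt hr⟩
  refine aux_L1 (fun t => ((t / p) ^ z • G t) * P) (fun t => ((t / p) ^ z • G t) * Δ t * P)
    (z - c) _ s r (by linarith) hs hsr ?_ ?_
  · intro t ht
    exact aux_proj z p W P c hWP Δ G hp t (hsub t ht).1 (hG t (hsub t ht))
  · intro t ht
    have h0 : 0 ≤ S := (norm_nonneg _).trans (hS t ht)
    refine (norm_mul_le _ _).trans (mul_le_mul_of_nonneg_right ?_ (norm_nonneg _))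
    exact (norm_mul_le _ _).trans
      (mul_le_mul (hS t ht) (hD t (hsub t ht)) (norm_nonneg _) h0)

theorem aux_main {R : Type*} [NormedRing R] [NormedAlgebra ℝ R] [CompleteSpace R]
    (b z : ℝ) (hb : 0 < b) (hz : 0 < z) (W : R) (Δ : ℝ → R) (D : ℝ)
    (hD : ∀ t ∈ Set.Ioo (0:ℝ) b, ‖Δ t‖ ≤ D)
    (G : ℝ → ℝ → R)
    (hG : ∀ p ∈ Set.Ioo (0:ℝ) b, ∀ t ∈ Set.Ioo (0:ℝ) b,
      HasDerivAt (G p) (G p t * ((-t⁻¹) • W + Δ t)) t)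
    (hGp : ∀ p ∈ Set.Ioo (0:ℝ) b, G p p = 1)
    (P0 P1 P2 : R) (hP : P0 + P1 + P2 = 1)
    (hW0 : W * P0 = z • P0) (hW1 : W * P1 = (0:ℝ) • P1) (hW2 : W * P2 = (-z) • P2)
    (hco : ∀ p ∈ Set.Ioo (0:ℝ) b, ∀ q ∈ Set.Ioo (0:ℝ) b, ∀ s ∈ Set.Ioo (0:ℝ) b,
      G p s = G p q * G q s) :
    ∃ L : ℝ → R, (∀ p ∈ Set.Ioo (0:ℝ) b,
      Tendsto (fun t : ℝ => (t / p) ^ z • G p t) (𝓝[>] 0) (𝓝 (L p)) ∧ L p * P0 = L p) ∧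
      Tendsto L (𝓝[>] 0) (𝓝 P0) := by
  have hD0 : 0 ≤ D := (norm_nonneg _).trans (hD (b/2) ⟨by linarith, by linarith⟩)
  set C := ‖P0‖ + ‖P1‖ + ‖P2‖ with hC
  have hC0 : 0 ≤ C := by positivity
  obtain ⟨δ, hδ0, hδb, hδ⟩ : ∃ δ, 0 < δ ∧ δ < b ∧ D * C * δ ≤ 1 / 2 := by
    refine ⟨min (b / 2) (1 / (2 * (D * C + 1))), by positivity,
      (min_le_left _ _).trans_lt (by linarith), ?_⟩
    have h0 : 0 ≤ D * C := by positivity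
    calc D * C * _ ≤ D * C * (1 / (2 * (D * C + 1))) := by gcongr; exact min_le_right _ _
      _ ≤ 1 / 2 := by
        field_simp
        linarith
  have hq1 : ∀ q ∈ Set.Ioo (0:ℝ) b, (q / q) ^ z • G q q = 1 := by
    intro q hq
    rw [div_self hq.1.ne', Real.one_rpow, one_smul, hGp q hq]
  have hbd : ∀ q, 0 < q → q ≤ δ → ∀ t, 0 < t → t ≤ q → ‖(t / q) ^ z • G q t‖ ≤ 2 * C := by
    intro q hq0 hqδ t ht htq
    have hq : q ∈ Set.Ioo 0 b := ⟨hq0, hqδ.trans_lt hδb⟩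
    refine aux_bound_s10 (fun t => (t / q) ^ z • G q t) C (D * C * q) t q ?_ htq ?_ ?_
    · refine le_trans ?_ hδ
      gcongr
    · intro s hs
      have hs0 : s ∈ Set.Ioo 0 b := ⟨ht.trans_le hs.1, hs.2.trans_lt hq.2⟩
      refine ContinuousAt.continuousWithinAt ?_
      refine ContinuousAt.smul ?_ (hG q hq s hs0).continuousAt
      exact ContinuousAt.rpow_const (by fun_prop) (Or.inr hz.le)
    · intro s hs S hS
      have hs0 : 0 < s := ht.trans_le hs.1
      have hS0 : 0 ≤ S := (norm_nonneg _).trans (hS s ⟨le_rfl, hs.2⟩)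
      have key : ∀ P : R, ∀ c ≤ z, W * P = c • P →
          ‖((s / q) ^ z • G q s) * P‖ ≤ ‖P‖ + S * D * ‖P‖ * q := by
        intro P c hc hWP
        have h1 := aux_est b z W Δ D hD (G q) q hq0 (hG q hq) P c hc hWP s q S hs0 hs.2 hq.2 hS
        rw [hq1 q hq, one_mul] at h1
        have h2 := norm_le_norm_sub_add (((s / q) ^ z • G q s) * P) ((s / q) ^ (z - c) • P)
        have h3 : ‖(s / q) ^ (z - c) • P‖ ≤ ‖P‖ := by
          rw [norm_smul, Real.norm_of_nonneg (by positivity)]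
          have : (s / q) ^ (z - c) ≤ 1 :=
            Real.rpow_le_one (by positivity) ((div_le_one hq0).2 hs.2) (by linarith)
          exact mul_le_of_le_one_left (norm_nonneg _) this
        have h4 : S * D * ‖P‖ * (q - s) ≤ S * D * ‖P‖ * q := by
          gcongr
          linarith
        linarith
      have e : (s / q) ^ z • G q s = ((s / q) ^ z • G q s) * P0 + ((s / q) ^ z • G q s) * P1
          + ((s / q) ^ z • G q s) * P2 := by
        rw [← mul_add, ← mul_add, hP, mul_one]
      have k0 := key P0 z le_rfl hW0
      have k1 := key P1 0 hz.le hW1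
      have k2 := key P2 (-z) (by linarith) hW2
      have := norm_add₃_le (a := ((s / q) ^ z • G q s) * P0) (b := ((s / q) ^ z • G q s) * P1)
        (c := ((s / q) ^ z • G q s) * P2)
      rw [← e] at this
      show ‖(s / q) ^ z • G q s‖ ≤ _
      have e2 : C + D * C * q * S = (‖P0‖ + S * D * ‖P0‖ * q) + (‖P1‖ + S * D * ‖P1‖ * q)
          + (‖P2‖ + S * D * ‖P2‖ * q) := by rw [hC]; ring
      linarith
  have hest : ∀ q, 0 < q → q ≤ δ → ∀ P : R, ∀ c ≤ z, W * P = c • P → ∀ r s, 0 < s → s ≤ r → r ≤ q →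
      ‖((s / q) ^ z • G q s) * P - (s / r) ^ (z - c) • (((r / q) ^ z • G q r) * P)‖
      ≤ 2 * C * D * ‖P‖ * (r - s) := by
    intro q hq0 hqδ P c hc hWP r s hs hsr hrq
    exact aux_est b z W Δ D hD (G q) q hq0 (hG q ⟨hq0, hqδ.trans_lt hδb⟩) P c hc hWP s r _ hs hsr
      (hrq.trans_lt (hqδ.trans_lt hδb))
      (fun t ht => hbd q hq0 hqδ t (hs.trans_le ht.1) (ht.2.trans hrq))
  have hsmall : ∀ q, 0 < q → q ≤ δ → ∃ M : R,
      Tendsto (fun t : ℝ => (t / q) ^ z • G q t) (𝓝[>] 0) (𝓝 M) ∧ M * P0 = M ∧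
      ‖M - P0‖ ≤ 2 * C * D * ‖P0‖ * q := by
    intro q hq0 hqδ
    have hq : q ∈ Set.Ioo 0 b := ⟨hq0, hqδ.trans_lt hδb⟩
    have t1 : Tendsto (fun t : ℝ => ((t / q) ^ z • G q t) * P1) (𝓝[>] 0) (𝓝 0) :=
      aux_L2 _ (z - 0) _ q (by linarith) hq0 (hest q hq0 hqδ P1 0 hz.le hW1)
    have t2 : Tendsto (fun t : ℝ => ((t / q) ^ z • G q t) * P2) (𝓝[>] 0) (𝓝 0) :=
      aux_L2 _ (z - (-z)) _ q (by linarith) hq0 (hest q hq0 hqδ P2 (-z) (by linarith) hW2)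
    have h0 := hest q hq0 hqδ P0 z le_rfl hW0
    simp only [sub_self, Real.rpow_zero, one_smul] at h0
    have hlip : LipschitzOnWith (Real.toNNReal (2 * C * D * ‖P0‖))
        (fun t : ℝ => ((t / q) ^ z • G q t) * P0) (Set.Ioc 0 q) := by
      refine LipschitzOnWith.of_dist_le_mul fun x hx y hy => ?_
      rw [Real.coe_toNNReal _ (by positivity), dist_eq_norm, Real.dist_eq]
      rcases le_total x y with h | h
      · rw [abs_sub_comm, abs_of_nonneg (by linarith)]
        exact h0 y x hx.1 h hy.2
      · rw [norm_sub_rev, abs_of_nonneg (by linarith)]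
        exact h0 x y hy.1 h hx.2
    have hcau : Cauchy (Filter.map (fun t : ℝ => ((t / q) ^ z • G q t) * P0) (𝓝[>] 0)) := by
      refine Cauchy.map_of_le (cauchy_nhds.mono nhdsWithin_le_nhds) hlip.uniformContinuousOn ?_
      exact le_principal_iff.2 (Ioc_mem_nhdsGT hq0)
    obtain ⟨M, hM⟩ := CompleteSpace.complete hcau
    have t0 : Tendsto (fun t : ℝ => ((t / q) ^ z • G q t) * P0) (𝓝[>] 0) (𝓝 M) := hM
    have tH : Tendsto (fun t : ℝ => (t / q) ^ z • G q t) (𝓝[>] 0) (𝓝 M) := by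
      have := (t0.add t1).add t2
      simpa only [← mul_add, hP, mul_one, add_zero] using this
    refine ⟨M, tH, ?_, ?_⟩
    · exact tendsto_nhds_unique (tH.mul_const P0) t0
    · refine le_of_tendsto (t0.sub_const P0).norm ?_
      filter_upwards [Ioc_mem_nhdsGT hq0] with s hs
      have h1 := h0 q s hs.1 hs.2 le_rfl
      rw [hq1 q hq, one_mul] at h1
      refine h1.trans ?_
      have := hs.1
      gcongr
      linarith
  have hall : ∀ p ∈ Set.Ioo (0:ℝ) b, ∃ M : R,
      Tendsto (fun t : ℝ => (t / p) ^ z • G p t) (𝓝[>] 0) (𝓝 M) ∧ M * P0 = M := by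
    intro p hp
    obtain ⟨M, h1, h2, -⟩ := hsmall δ hδ0 le_rfl
    refine ⟨((δ / p) ^ z • G p δ) * M, ?_, by rw [mul_assoc, h2]⟩
    refine (h1.const_mul ((δ / p) ^ z • G p δ)).congr' ?_
    filter_upwards [Ioo_mem_nhdsGT hb] with t ht
    rw [hco p hp δ ⟨hδ0, hδb⟩ t ht, smul_mul_smul_comm,
      ← Real.mul_rpow (div_nonneg hδ0.le hp.1.le) (div_nonneg ht.1.le hδ0.le)]
    congr 2
    have := hp.1
    field_simp
  choose! L hL using hall
  refine ⟨L, hL, ?_⟩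
  rw [tendsto_iff_norm_sub_tendsto_zero]
  have hlim : Tendsto (fun q : ℝ => 2 * C * D * ‖P0‖ * q) (𝓝[>] 0) (𝓝 0) := by
    have : Tendsto (fun q : ℝ => 2 * C * D * ‖P0‖ * q) (𝓝 0) (𝓝 (2 * C * D * ‖P0‖ * 0)) :=
      tendsto_id.const_mul _
    rw [mul_zero] at this
    exact this.mono_left nhdsWithin_le_nhds
  refine squeeze_zero' (Eventually.of_forall fun _ => norm_nonneg _) ?_ hlim
  filter_upwards [Ioc_mem_nhdsGT hδ0] with q hq
  obtain ⟨M, h1, -, h3⟩ := hsmall q hq.1 hq.2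
  rwa [tendsto_nhds_unique (hL q ⟨hq.1, hq.2.trans_lt hδb⟩).1 h1]

lemma wedge_apply (v w x : E n) : wedge v w x = mink v x • w - mink w x • v := rfl

lemma aux_mulA (A B : E n →L[ℝ] E n) (x : E n) : (A * B) x = A (B x) := rfl

lemma aux_ss (a c : ℝ) (x y : E n →L[ℝ] E n) :
    (a • x) * (c • y) = (a * c) • (x * y) := by
  ext1 w
  simp only [aux_mulA, smul_apply, map_smul, smul_smul]
  rw [mul_comm]

lemma rankOne_apply (v w x : E n) : rankOne v w x = mink x w • v := rfl

lemma aux_mink_deriv (f : ℝ → E n) (f' : E n) (t : ℝ) (hf : HasDerivAt f f' t) :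
    HasDerivAt (fun s => mink (f s) (f s)) (2 * mink f' (f t)) t := by
  unfold mink
  have hc : ∀ i, HasDerivAt (fun s => f s i) (f' i) t := fun i =>
    (EuclideanSpace.proj (𝕜 := ℝ) i).hasFDerivAt.comp_hasDerivAt t hf
  have := HasDerivAt.fun_sum (u := Finset.univ) (fun i _ =>
    (((hc i).const_mul (if i = Fin.last (n + 1) then (-1 : ℝ) else 1)).mul (hc i)))
  refine this.congr_deriv ?_
  rw [Finset.mul_sum]
  exact Finset.sum_congr rfl fun i _ => by ring

lemma aux_mink_cont : Continuous (fun x : E n => mink x x) := by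
  unfold mink
  fun_prop

lemma aux_wedge_skew (v w x : E n) : mink (wedge v w x) x = 0 := by
  rw [wedge_apply, sub_eq_add_neg, ← neg_smul, mink_add_left, mink_smul_left, mink_smul_left]
  ring

lemma aux_iso (b : ℝ) (vp vm : E n) (Δ : ℝ → E n →L[ℝ] E n)
    (hΔskew : ∀ t ∈ Set.Ioo (0:ℝ) b, ∀ x y : E n, mink (Δ t x) y = - mink x (Δ t y))
    (G : ℝ → E n →L[ℝ] E n)
    (hG : ∀ t ∈ Set.Ioo (0:ℝ) b,
      HasDerivAt G (G t * ((-t⁻¹) • wedge vm vp + Δ t)) t)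
    (p : ℝ) (hp : p ∈ Set.Ioo (0:ℝ) b) (hGp : G p = 1)
    (hu : ∀ t ∈ Set.Ioo (0:ℝ) b, IsUnit (G t)) (t : ℝ) (ht : t ∈ Set.Ioo (0:ℝ) b) (x : E n) :
    mink (G t x) (G t x) = mink x x := by
  have hd : ∀ s ∈ Set.Ioo (0:ℝ) b, HasDerivAt (fun s => Ring.inverse (G s))
      (-(((-s⁻¹) • wedge vm vp + Δ s) * Ring.inverse (G s))) s := by
    intro s hs
    obtain ⟨u, hu⟩ := hu s hs
    have h1 := hasFDerivAt_ringInverse (𝕜 := ℝ) u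
    rw [hu] at h1
    refine (h1.comp_hasDerivAt s (hG s hs)).congr_deriv ?_
    rw [← hu]
    simp [mul_assoc]
  have hd2 : ∀ s ∈ Set.Ioo (0:ℝ) b, ∀ y : E n,
      HasDerivAt (fun s => mink (Ring.inverse (G s) y) (Ring.inverse (G s) y)) 0 s := by
    intro s hs y
    have h1 := (hd s hs).clm_apply (hasDerivAt_const s y)
    refine (aux_mink_deriv _ _ s h1).congr_deriv ?_
    set w := Ring.inverse (G s) y with hw
    have e : (-(((-s⁻¹) • wedge vm vp + Δ s) * Ring.inverse (G s))) y + Ring.inverse (G s) 0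
        = s⁻¹ • wedge vm vp w + (-1 : ℝ) • Δ s w := by
      simp [hw]
      abel
    rw [e, mink_add_left, mink_smul_left, mink_smul_left, aux_wedge_skew]
    have := hΔskew s hs w w
    rw [mink_comm w] at this
    have h0 : mink (Δ s w) w = 0 := by linarith
    rw [h0]; ring
  have hconst : mink (Ring.inverse (G t) (G t x)) (Ring.inverse (G t) (G t x)) =
      mink (Ring.inverse (G p) (G t x)) (Ring.inverse (G p) (G t x)) := by
    refine isOpen_Ioo.is_const_of_deriv_eq_zero
      (f := fun s => mink (Ring.inverse (G s) (G t x)) (Ring.inverse (G s) (G t x)))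
      isPreconnected_Ioo ?_ ?_ ht hp
    · intro s hs
      exact (hd2 s hs _).differentiableAt.differentiableWithinAt
    · intro s hs
      exact (hd2 s hs _).deriv
  rw [hGp, Ring.inverse_one] at hconst
  have e : Ring.inverse (G t) (G t x) = x := by
    have := Ring.inverse_mul_cancel _ (hu t ht)
    exact congrArg (fun A : E n →L[ℝ] E n => A x) this
  rw [e] at hconst
  exact hconst.symm

/-- Proposition 3.6: limiting behaviour of primitives of Minkowski pole forms. -/
theorem stmt10 {n : ℕ} (b : ℝ) (hb : 0 < b)
    (vp vm : E n) (hvp : mink vp vp = 0) (hvm : mink vm vm = 0)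
    (hζ : 0 < mink vp vm)
    (Δ : ℝ → E n →L[ℝ] E n)
    (hΔc : ContinuousOn Δ (Set.Ioo 0 b))
    (hΔb : ∃ D : ℝ, ∀ t ∈ Set.Ioo (0:ℝ) b, ‖Δ t‖ ≤ D)
    (hΔskew : ∀ t ∈ Set.Ioo (0:ℝ) b, ∀ x y : E n, mink (Δ t x) y = - mink x (Δ t y))
    (G : ℝ → ℝ → E n →L[ℝ] E n)
    (hG : ∀ p ∈ Set.Ioo (0:ℝ) b, ∀ t ∈ Set.Ioo (0:ℝ) b,
      HasDerivAt (G p) (G p t * ((-t⁻¹) • wedge vm vp + Δ t)) t)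
    (hGp : ∀ p ∈ Set.Ioo (0:ℝ) b, G p p = 1) :
    ∃ k : ℝ → E n, ContinuousOn k (Set.Ico 0 b) ∧
      (∀ t ∈ Set.Ico (0:ℝ) b, mink (k t) (k t) = 0 ∧ k t ≠ 0) ∧
      k 0 = (mink vp vm)⁻¹ • vp ∧
      ∀ p ∈ Set.Ioo (0:ℝ) b,
        Tendsto (fun t : ℝ => (t / p) ^ (mink vp vm) • G p t)
          (𝓝[>] 0) (𝓝 (rankOne (k p) vm)) ∧
        ∀ t ∈ Set.Ioo (0:ℝ) b, (t / p) ^ (mink vp vm) • G p t (k t) = k p := by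
  obtain ⟨D, hD⟩ := hΔb
  set z := mink vp vm with hz
  have hz' : mink vm vp = z := mink_comm _ _
  have hz0 : z ≠ 0 := hζ.ne'
  have hco : ∀ p ∈ Set.Ioo (0:ℝ) b, ∀ q ∈ Set.Ioo (0:ℝ) b, ∀ s ∈ Set.Ioo (0:ℝ) b,
      G p s = G p q * G q s := by
    intro p hp q hq s hs
    refine aux_cocycle b (wedge vm vp) Δ D hD (G p) (fun s => G p q * G q s) (hG p hp) ?_ q hq
      ?_ s hs
    · intro t ht
      simpa only [mul_assoc] using (hG q hq t ht).const_mul (G p q)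
    · simp only [hGp q hq, mul_one]
  have hunit : ∀ p ∈ Set.Ioo (0:ℝ) b, ∀ q ∈ Set.Ioo (0:ℝ) b, IsUnit (G p q) := by
    intro p hp q hq
    exact ⟨⟨G p q, G q p, by rw [← hco p hp q hq p hp, hGp p hp],
      by rw [← hco q hq p hp q hq, hGp q hq]⟩, rfl⟩
  have hinv : ∀ p ∈ Set.Ioo (0:ℝ) b, ∀ q ∈ Set.Ioo (0:ℝ) b, Ring.inverse (G p q) = G q p := by
    intro p hp q hq
    have h1 : G p q * G q p = 1 := by rw [← hco p hp q hq p hp, hGp p hp]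
    rw [← mul_one (Ring.inverse (G p q)), ← h1, ← mul_assoc,
      Ring.inverse_mul_cancel _ (hunit p hp q hq), one_mul]
  obtain ⟨L, hL, hL0⟩ := aux_main b z hb hζ (wedge vm vp) Δ D hD G hG hGp
    (z⁻¹ • rankOne vp vm) (1 - z⁻¹ • rankOne vp vm - z⁻¹ • rankOne vm vp)
    (z⁻¹ • rankOne vm vp) (by abel)
    (by
      ext1 x
      simp only [aux_mulA, smul_apply, wedge_apply,
        rankOne_apply, mink_smul_right, hvp, hz', ← hz]
      simp only [smul_smul, mul_zero, zero_smul, sub_zero]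
      congr 1
      field_simp)
    (by
      have h0 : ∀ u x : E n, mink u (x - (z⁻¹ * mink x vm) • vp - (z⁻¹ * mink x vp) • vm)
          = mink u x - z⁻¹ * mink x vm * mink u vp - z⁻¹ * mink x vp * mink u vm := by
        intro u x
        rw [sub_eq_add_neg, sub_eq_add_neg, ← neg_smul, ← neg_smul, mink_add_right, mink_add_right,
          mink_smul_right, mink_smul_right]
        ring
      ext1 x
      simp only [aux_mulA, smul_apply, wedge_apply,
        rankOne_apply, sub_apply, one_apply_eq_self, smul_smul, h0,
        hvp, hvm, hz', ← hz, zero_smul]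
      rw [mink_comm vm x, mink_comm vp x]
      field_simp
      simp)
    (by
      ext1 x
      simp only [aux_mulA, smul_apply, wedge_apply,
        rankOne_apply, mink_smul_right, hvm, hz', ← hz]
      simp only [smul_smul, mul_zero, zero_smul, zero_sub, ← neg_smul]
      congr 1
      field_simp) hco
  have hvp0 : vp ≠ 0 := by
    rintro rfl
    apply hz0
    rw [hz]
    simp [mink]
  have hk0 : z⁻¹ • vp ≠ 0 := smul_ne_zero (inv_ne_zero hz0) hvp0
  have hP0k : (z⁻¹ • rankOne vp vm : E n →L[ℝ] E n) (z⁻¹ • vp) = z⁻¹ • vp := by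
    simp only [smul_apply, rankOne_apply, mink_smul_left, ← hz]
    rw [inv_mul_cancel₀ hz0, one_smul]
  set k : ℝ → E n := fun t => if t = 0 then z⁻¹ • vp else L t (z⁻¹ • vp) with hk
  have hkp : ∀ p ∈ Set.Ioo (0:ℝ) b, k p = L p (z⁻¹ • vp) := fun p hp => if_neg hp.1.ne'
  have hkz : k 0 = z⁻¹ • vp := if_pos rfl
  have hLk : ∀ p ∈ Set.Ioo (0:ℝ) b, L p = rankOne (k p) vm := by
    intro p hp
    rw [hkp p hp]
    conv_lhs => rw [← (hL p hp).2]
    ext1 x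
    simp only [aux_mulA, smul_apply, rankOne_apply,
      map_smul]
    rw [smul_comm]
  have hLco : ∀ p ∈ Set.Ioo (0:ℝ) b, ∀ t ∈ Set.Ioo (0:ℝ) b,
      L p = ((t / p) ^ z • G p t) * L t := by
    intro p hp t ht
    refine tendsto_nhds_unique (hL p hp).1
      (((hL t ht).1.const_mul ((t / p) ^ z • G p t)).congr' ?_)
    filter_upwards [Ioo_mem_nhdsGT hb] with s hs
    rw [hco p hp t ht s hs, aux_ss,
      ← Real.mul_rpow (div_nonneg ht.1.le hp.1.le) (div_nonneg hs.1.le ht.1.le)]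
    congr 2
    have := hp.1
    have := ht.1
    field_simp
  have hkco : ∀ p ∈ Set.Ioo (0:ℝ) b, ∀ t ∈ Set.Ioo (0:ℝ) b,
      (t / p) ^ z • G p t (k t) = k p := by
    intro p hp t ht
    rw [hkp p hp, hkp t ht, hLco p hp t ht]
    rfl
  have hkt : Tendsto k (𝓝[>] 0) (𝓝 (z⁻¹ • vp)) := by
    have h1 : Tendsto (fun t => L t (z⁻¹ • vp)) (𝓝[>] 0) (𝓝 (z⁻¹ • vp)) := by
      have := ((ContinuousLinearMap.apply ℝ (E n) (z⁻¹ • vp)).continuous.tendsto _).comp hL0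
      rw [ContinuousLinearMap.apply_apply, hP0k] at this
      exact this
    refine h1.congr' ?_
    filter_upwards [Ioo_mem_nhdsGT hb] with s hs
    exact (hkp s hs).symm
  refine ⟨k, ?_, ?_, hkz, ?_⟩
  · intro t ht
    rcases ht.1.eq_or_lt with h | h
    · subst h
      rw [ContinuousWithinAt, hkz]
      have h1 : Tendsto k (𝓝[≥] 0) (𝓝 (z⁻¹ • vp)) := by
        rw [← Set.Ioi_insert, nhdsWithin_insert, tendsto_sup]
        refine ⟨?_, hkt⟩
        rw [tendsto_pure_left]
        intro s hs
        rw [hkz]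
        exact mem_of_mem_nhds hs
      exact h1.mono_left (nhdsWithin_mono _ fun s hs => hs.1)
    · have htb : t ∈ Set.Ioo 0 b := ⟨h, ht.2⟩
      refine ContinuousAt.continuousWithinAt ?_
      have h1 : ContinuousAt (fun s => (t / s) ^ z • (Ring.inverse (G t s)) (k t)) t := by
        refine ContinuousAt.fun_smul ?_ ?_
        · refine ContinuousAt.rpow_const ?_ (Or.inr hζ.le)
          exact continuousAt_const.div continuousAt_id h.ne'
        · obtain ⟨u, hu⟩ := hunit t htb t htb
          have h2 := NormedRing.inverse_continuousAt u
          rw [hu] at h2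
          have h3 : ContinuousAt (fun s => Ring.inverse (G t s)) t :=
            ContinuousAt.comp (f := fun s => G t s) (g := Ring.inverse) h2
              (hG t htb t htb).continuousAt
          exact h3.clm_apply continuousAt_const
      refine h1.congr ?_
      filter_upwards [isOpen_Ioo.mem_nhds htb] with s hs
      rw [hinv t htb s hs]
      exact hkco s hs t htb
  · intro t ht
    rcases ht.1.eq_or_lt with h | h
    · subst h
      rw [hkz]
      refine ⟨?_, hk0⟩
      rw [mink_smul_left, mink_smul_right, hvp]
      ring
    · have htb : t ∈ Set.Ioo 0 b := ⟨h, ht.2⟩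
      constructor
      · have h1 : Tendsto (fun s => ((s / t) ^ z • G t s) (z⁻¹ • vp)) (𝓝[>] 0) (𝓝 (k t)) := by
          have := ((ContinuousLinearMap.apply ℝ (E n) (z⁻¹ • vp)).continuous.tendsto _).comp
            (hL t htb).1
          rw [ContinuousLinearMap.apply_apply, ← hkp t htb] at this
          exact this
        have h2 := (aux_mink_cont.tendsto _).comp h1
        refine tendsto_nhds_unique h2 (tendsto_const_nhds.congr' ?_)
        filter_upwards [Ioo_mem_nhdsGT hb] with s hs
        simp only [Function.comp, smul_apply]
        rw [mink_smul_left, mink_smul_right,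
          aux_iso b vp vm Δ hΔskew (G t) (hG t htb) t htb (hGp t htb) (hunit t htb) s hs,
          mink_smul_left, mink_smul_right, hvp]
        ring
      · intro h0
        apply hk0
        refine tendsto_nhds_unique hkt (tendsto_const_nhds.congr' ?_)
        filter_upwards [Ioo_mem_nhdsGT hb] with s hs
        rw [← hkco s hs t htb, h0, map_zero, smul_zero]
  · intro p hp
    refine ⟨?_, hkco p hp⟩
    rw [← hLk p hp]
    exact (hL p hp).1
end
end

section
/- Let o, ι, 𝔱 ∈ ℝ^{n+2} satisfy ⟨o,o⟩ = ⟨ι,ι⟩ = 0, ⟨o,ι⟩ = −1, ⟨𝔱,𝔱⟩ = 1, ⟨o,𝔱⟩ = ⟨ι,𝔱⟩ = 0, let λ ∈ ℝ, and set A := (o−𝔱)∧(ι−λ𝔱). Then: (i) if 1−2λ > 0, then with μ := √(1−2λ) and v± := μ(λo−ι) ± (λo+ι−2λ𝔱) one has A(v±) = ±μ·v±, ⟨v±,v±⟩ = 0, and ⟨v₋,v₊⟩ = 4λ(1−2λ); in particular, for 0 < λ < 1/2 the Minkowski form restricted to span{o−𝔱, ι−λ𝔱} is nondegenerate and indefinite;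 (ii) if 1−2λ < 0, the Minkowski form restricted to span{o−𝔱, ι−λ𝔱} is positive definite; (iii) if 1−2λ = 0, the Minkowski form restricted to span{o−𝔱, ι−λ𝔱} is degenerate. -/
open scoped BigOperators Topology
open Filter Set MeasureTheory

noncomputable section

variable {n : ℕ}

lemma aux_sub_right {n : ℕ} (v x y : E n) : mink v (x - y) = mink v x - mink v y := by
  simp [mink, mul_sub, Finset.sum_sub_distrib]

lemma aux_sub_left {n : ℕ} (x y v : E n) : mink (x - y) v = mink x v - mink y v := by
  rw [mink_comm, aux_sub_right, mink_comm v x, mink_comm v y]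

lemma aux_wedge {n : ℕ} (v w x : E n) : wedge v w x = mink v x • w - mink w x • v := rfl

/-- Lemma 5.1: algebraic type and null eigenvectors of the pure pole
form `ξ_λ` arising from the singular gauge transformation. -/
theorem stmt13 {n : ℕ} (o ι 𝔱 : E n) (lam : ℝ)
    (h1 : mink o o = 0) (h2 : mink ι ι = 0) (h3 : mink o ι = -1)
    (h4 : mink 𝔱 𝔱 = 1) (h5 : mink o 𝔱 = 0) (h6 : mink ι 𝔱 = 0) :
    ((0 < 1 - 2 * lam) →
      (wedge (o - 𝔱) (ι - lam • 𝔱))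
          (Real.sqrt (1 - 2 * lam) • (lam • o - ι) + (lam • o + ι - (2 * lam) • 𝔱)) =
        Real.sqrt (1 - 2 * lam) •
          (Real.sqrt (1 - 2 * lam) • (lam • o - ι) + (lam • o + ι - (2 * lam) • 𝔱)) ∧
      (wedge (o - 𝔱) (ι - lam • 𝔱))
          (Real.sqrt (1 - 2 * lam) • (lam • o - ι) - (lam • o + ι - (2 * lam) • 𝔱)) =
        (-Real.sqrt (1 - 2 * lam)) •
          (Real.sqrt (1 - 2 * lam) • (lam • o - ι) - (lam • o + ι - (2 * lam) • 𝔱)) ∧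
      mink (Real.sqrt (1 - 2 * lam) • (lam • o - ι) + (lam • o + ι - (2 * lam) • 𝔱))
          (Real.sqrt (1 - 2 * lam) • (lam • o - ι) + (lam • o + ι - (2 * lam) • 𝔱)) = 0 ∧
      mink (Real.sqrt (1 - 2 * lam) • (lam • o - ι) - (lam • o + ι - (2 * lam) • 𝔱))
          (Real.sqrt (1 - 2 * lam) • (lam • o - ι) - (lam • o + ι - (2 * lam) • 𝔱)) = 0 ∧
      mink (Real.sqrt (1 - 2 * lam) • (lam • o - ι) - (lam • o + ι - (2 * lam) • 𝔱))
          (Real.sqrt (1 - 2 * lam) • (lam • o - ι) + (lam • o + ι - (2 * lam) • 𝔱)) =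
        4 * lam * (1 - 2 * lam) ∧
      (0 < lam → lam < 1 / 2 →
        (∀ x ∈ Submodule.span ℝ ({o - 𝔱, ι - lam • 𝔱} : Set (E n)),
          (∀ y ∈ Submodule.span ℝ ({o - 𝔱, ι - lam • 𝔱} : Set (E n)), mink x y = 0) → x = 0) ∧
        (∃ x ∈ Submodule.span ℝ ({o - 𝔱, ι - lam • 𝔱} : Set (E n)), 0 < mink x x) ∧
        (∃ y ∈ Submodule.span ℝ ({o - 𝔱, ι - lam • 𝔱} : Set (E n)), mink y y < 0))) ∧
    ((1 - 2 * lam < 0) →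
      ∀ x ∈ Submodule.span ℝ ({o - 𝔱, ι - lam • 𝔱} : Set (E n)), x ≠ 0 → 0 < mink x x) ∧
    ((1 - 2 * lam = 0) →
      ∃ x ∈ Submodule.span ℝ ({o - 𝔱, ι - lam • 𝔱} : Set (E n)), x ≠ 0 ∧
        ∀ y ∈ Submodule.span ℝ ({o - 𝔱, ι - lam • 𝔱} : Set (E n)), mink x y = 0) := by
  have h3' : mink ι o = -1 := by rw [mink_comm, h3]
  have h5' : mink 𝔱 o = 0 := by rw [mink_comm, h5]
  have h6' : mink 𝔱 ι = 0 := by rw [mink_comm, h6]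
  refine ⟨fun h => ?_, fun h => ?_, fun h => ?_⟩
  · have hs : Real.sqrt (1 - 2 * lam) ^ 2 = 1 - 2 * lam := Real.sq_sqrt h.le
    generalize Real.sqrt (1 - 2 * lam) = μ at hs ⊢
    obtain rfl : lam = (1 - μ ^ 2) / 2 := by linarith
    refine ⟨?_, ?_, ?_, ?_, ?_, ?_⟩
    · simp only [aux_wedge, mink_add_right, mink_add_left, aux_sub_right, aux_sub_left,
        mink_smul_left, mink_smul_right, h1, h2, h3, h4, h5, h6, h3', h5', h6']
      module
    · simp only [aux_wedge, mink_add_right, mink_add_left, aux_sub_right, aux_sub_left,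
        mink_smul_left, mink_smul_right, h1, h2, h3, h4, h5, h6, h3', h5', h6']
      module
    · simp only [mink_add_right, mink_add_left, aux_sub_right, aux_sub_left,
        mink_smul_left, mink_smul_right, h1, h2, h3, h4, h5, h6, h3', h5', h6']
      ring
    · simp only [mink_add_right, mink_add_left, aux_sub_right, aux_sub_left,
        mink_smul_left, mink_smul_right, h1, h2, h3, h4, h5, h6, h3', h5', h6']
      ring
    · simp only [mink_add_right, mink_add_left, aux_sub_right, aux_sub_left,
        mink_smul_left, mink_smul_right, h1, h2, h3, h4, h5, h6, h3', h5', h6']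
      ring
    · clear hs
      generalize (1 - μ ^ 2) / 2 = lam at h ⊢
      intro _ _
      refine ⟨?_, ?_, ?_⟩
      · intro x hx hy
        obtain ⟨a, b, rfl⟩ := Submodule.mem_span_pair.1 hx
        have e1 := hy (o - 𝔱) (Submodule.subset_span (by simp))
        have e2 := hy (ι - lam • 𝔱) (Submodule.subset_span (by simp))
        simp only [mink_add_left, aux_sub_right, aux_sub_left,
          mink_smul_left, mink_smul_right, h1, h2, h3, h4, h5, h6, h3', h5', h6'] at e1 e2
        have hb : (1 - 2 * lam) * b = 0 := by linear_combination (lam - 1) * e1 - e2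
        have hb0 : b = 0 := (mul_eq_zero.1 hb).resolve_left h.ne'
        subst hb0
        have ha0 : a = 0 := by linarith
        subst ha0
        simp
      · refine ⟨o - 𝔱, Submodule.subset_span (by simp), ?_⟩
        simp only [aux_sub_right, aux_sub_left, h1, h4, h5, h5']
        norm_num
      · refine ⟨(1 - lam) • (o - 𝔱) + (1 : ℝ) • (ι - lam • 𝔱),
          Submodule.mem_span_pair.2 ⟨_, _, rfl⟩, ?_⟩
        simp only [mink_add_right, mink_add_left, aux_sub_right, aux_sub_left,
          mink_smul_left, mink_smul_right, h1, h2, h3, h4, h5, h6, h3', h5', h6']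
        nlinarith
  · intro x hx hne
    obtain ⟨a, b, rfl⟩ := Submodule.mem_span_pair.1 hx
    have key : mink (a • (o - 𝔱) + b • (ι - lam • 𝔱)) (a • (o - 𝔱) + b • (ι - lam • 𝔱))
        = (a + (lam - 1) * b) ^ 2 + b ^ 2 * (2 * lam - 1) := by
      simp only [mink_add_right, mink_add_left, aux_sub_right, aux_sub_left,
        mink_smul_left, mink_smul_right, h1, h2, h3, h4, h5, h6, h3', h5', h6']
      ring
    rw [key]
    have hp : 0 < 2 * lam - 1 := by linarith
    by_cases hb : b = 0
    · subst hb
      have ha : a ≠ 0 := by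
        rintro rfl
        simp at hne
      have : 0 < a ^ 2 := by positivity
      linarith
    · positivity
  · obtain rfl : lam = 1 / 2 := by linarith
    refine ⟨(1 / 2 : ℝ) • (o - 𝔱) + (1 : ℝ) • (ι - (1 / 2 : ℝ) • 𝔱),
      Submodule.mem_span_pair.2 ⟨_, _, rfl⟩, ?_, ?_⟩
    · intro h0
      have e := congrArg (mink o) h0
      have z : mink o (0 : E n) = 0 := by simp [mink]
      simp only [z, mink_add_right, aux_sub_right, mink_smul_right, h1, h3, h5] at e
      norm_num at e
    · intro y hy
      obtain ⟨a, b, rfl⟩ := Submodule.mem_span_pair.1 hy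
      simp only [mink_add_right, mink_add_left, aux_sub_right, aux_sub_left,
        mink_smul_left, mink_smul_right, h1, h2, h3, h4, h5, h6, h3', h5', h6']
      ring
end
end
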